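/- Let L be a commutative subspace lattice on H, let Φ be a rank preserving linear map on Alg L, and let N ∈ L. Then N is isolated if and only if N is both consistent and twisted with respect to Φ. -/

import Mathlib

open scoped InnerProductSpace

noncomputable section

/-- The join (closed linear span) of a family of subspaces of a Hilbert space. -/
def closedJoin {H : Type*} [NormedAddCommGroup H] [InnerProductSpace ℂ H]
    (S : Set (Submodule ℂ H)) : Submodule ℂ H :=
  (sSup S).topologicalClosure

/-- A subspace lattice on `H`: a family of closed subspaces containing `{0}` and `H`,
closed under arbitrary intersections and arbitrary closed linear spans. -/
structure IsSubspaceLattice {H : Type*} [NormedAddCommGroup H] [InnerProductSpace ℂ H]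
    (L : Set (Submodule ℂ H)) : Prop where
  isClosed : ∀ E ∈ L, IsClosed (E : Set H)
  bot_mem : ⊥ ∈ L
  top_mem : ⊤ ∈ L
  sInf_mem : ∀ S : Set (Submodule ℂ H), S ⊆ L → sInf S ∈ L
  join_mem : ∀ S : Set (Submodule ℂ H), S ⊆ L → closedJoin S ∈ L

/-- `M₋`: the join of all members of `L` that do not contain `M`. -/
def minus {H : Type*} [NormedAddCommGroup H] [InnerProductSpace ℂ H]
    (L : Set (Submodule ℂ H)) (M : Submodule ℂ H) : Submodule ℂ H :=
  closedJoin {E | E ∈ L ∧ ¬ M ≤ E}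

open Classical in
/-- The orthogonal projection of `H` onto a closed subspace `E`, as an operator on `H`
(junk value `0` if `E` is not closed). -/
def projOf {H : Type*} [NormedAddCommGroup H] [InnerProductSpace ℂ H] [CompleteSpace H]
    (E : Submodule ℂ H) : H →L[ℂ] H :=
  if h : IsClosed (E : Set H) then
    haveI : CompleteSpace E := h.completeSpace_coe
    E.subtypeL.comp (Submodule.orthogonalProjectionOnto E)
  else 0

/-- A commutative subspace lattice: the orthogonal projections onto members commute. -/
structure IsCSL {H : Type*} [NormedAddCommGroup H] [InnerProductSpace ℂ H] [CompleteSpace H]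
    (L : Set (Submodule ℂ H)) extends IsSubspaceLattice L : Prop where
  commutes : ∀ E ∈ L, ∀ F ∈ L, projOf E * projOf F = projOf F * projOf E

/-- Complete distributivity of the lattice `L` (meets are intersections, joins are
closed linear spans). -/
def IsCompletelyDistributive {H : Type*} [NormedAddCommGroup H] [InnerProductSpace ℂ H]
    (L : Set (Submodule ℂ H)) : Prop :=
  ∀ (I : Type) (J : I → Type) (E : (i : I) → J i → Submodule ℂ H),
    (∀ i j, E i j ∈ L) →
     ((⨅ i, closedJoin (Set.range (E i)))
        = closedJoin (Set.range fun φ : (∀ i, J i) => ⨅ i, E i (φ i)))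
    ∧ (closedJoin (Set.range fun i => ⨅ j, E i j)
        = ⨅ φ : (∀ i, J i), closedJoin (Set.range fun i => E i (φ i)))

/-- `Alg L`: all bounded operators leaving every member of `L` invariant. -/
def algL {H : Type*} [NormedAddCommGroup H] [InnerProductSpace ℂ H]
    (L : Set (Submodule ℂ H)) : Set (H →L[ℂ] H) :=
  {T | ∀ E ∈ L, ∀ x ∈ E, T x ∈ E}

/-- The rank one operator `x ⊗ f* : h ↦ ⟨h, f⟩ x`. -/
def rankOne {H : Type*} [NormedAddCommGroup H] [InnerProductSpace ℂ H]
    (x f : H) : H →L[ℂ] H :=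
  (innerSL ℂ f).smulRight x

/-- The rank of a bounded operator: the dimension of its range. -/
def opRank {H : Type*} [NormedAddCommGroup H] [InnerProductSpace ℂ H]
    (T : H →L[ℂ] H) : Cardinal :=
  Module.rank ℂ (LinearMap.range (T : H →ₗ[ℂ] H))

/-- `Φ` is a linear map of `Alg L` into itself. -/
structure IsLinearOnAlg {H : Type*} [NormedAddCommGroup H] [InnerProductSpace ℂ H]
    (L : Set (Submodule ℂ H)) (Φ : (H →L[ℂ] H) → (H →L[ℂ] H)) : Prop where
  maps : ∀ A ∈ algL L, Φ A ∈ algL L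
  map_add : ∀ A ∈ algL L, ∀ B ∈ algL L, Φ (A + B) = Φ A + Φ B
  map_smul : ∀ (c : ℂ), ∀ A ∈ algL L, Φ (c • A) = c • Φ A

/-- `Φ` preserves the rank of every finite rank operator in `Alg L`. -/
def RankPreserving {H : Type*} [NormedAddCommGroup H] [InnerProductSpace ℂ H]
    (L : Set (Submodule ℂ H)) (Φ : (H →L[ℂ] H) → (H →L[ℂ] H)) : Prop :=
  ∀ A ∈ algL L, opRank A < Cardinal.aleph0 → opRank (Φ A) = opRank A

/-- `a ∼ b`: (nonzero) vectors `a` and `b` are linearly dependent. -/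
def Dep {H : Type*} [NormedAddCommGroup H] [InnerProductSpace ℂ H] (a b : H) : Prop :=
  ∃ c : ℂ, c ≠ 0 ∧ b = c • a

/-- `N` is consistent with respect to `Φ`. -/
def Consistent {H : Type*} [NormedAddCommGroup H] [InnerProductSpace ℂ H]
    (L : Set (Submodule ℂ H)) (Φ : (H →L[ℂ] H) → (H →L[ℂ] H))
    (N : Submodule ℂ H) : Prop :=
  N ≠ ⊥ ∧ minus L N ≠ ⊤ ∧
    ∃ (U : N →ₗ[ℂ] H) (V : ((minus L N)ᗮ : Submodule ℂ H) →ₗ[ℂ] H),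
      ∀ (x : N) (f : ((minus L N)ᗮ : Submodule ℂ H)),
        Φ (rankOne (x : H) (f : H)) = rankOne (U x) (V f)

/-- `N` is twisted with respect to `Φ`. -/
def Twisted {H : Type*} [NormedAddCommGroup H] [InnerProductSpace ℂ H]
    (L : Set (Submodule ℂ H)) (Φ : (H →L[ℂ] H) → (H →L[ℂ] H))
    (N : Submodule ℂ H) : Prop :=
  N ≠ ⊥ ∧ minus L N ≠ ⊤ ∧
    ∃ (U : ((minus L N)ᗮ : Submodule ℂ H) →ₗ⋆[ℂ] H) (V : N →ₗ⋆[ℂ] H),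
      ∀ (x : N) (f : ((minus L N)ᗮ : Submodule ℂ H)),
        Φ (rankOne (x : H) (f : H)) = rankOne (U f) (V x)

/-- `N` is isolated: `dim N = 1` and `N^⊥ ∈ L`. -/
def Isolated {H : Type*} [NormedAddCommGroup H] [InnerProductSpace ℂ H]
    (L : Set (Submodule ℂ H)) (N : Submodule ℂ H) : Prop :=
  Module.rank ℂ N = 1 ∧ Nᗮ ∈ L

/-- The family `F` of all `N ∈ L` with `N ≠ {0}` and `N₋ ≠ H`. -/
def famF {H : Type*} [NormedAddCommGroup H] [InnerProductSpace ℂ H]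
    (L : Set (Submodule ℂ H)) : Set (Submodule ℂ H) :=
  {N | N ∈ L ∧ N ≠ ⊥ ∧ minus L N ≠ ⊤}

/-- Subspaces are comparable if one contains the other. -/
def Comparable' {H : Type*} [NormedAddCommGroup H] [InnerProductSpace ℂ H]
    (M N : Submodule ℂ H) : Prop :=
  M ≤ N ∨ N ≤ M

/-- There is a chain in `F` from `M` to `N`. -/
def ChainConn {H : Type*} [NormedAddCommGroup H] [InnerProductSpace ℂ H]
    (L : Set (Submodule ℂ H)) (M N : Submodule ℂ H) : Prop :=
  ∃ (n : ℕ) (c : Fin (n + 1) → Submodule ℂ H),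
    (∀ k, c k ∈ famF L) ∧ c 0 = M ∧ c (Fin.last n) = N ∧
      ∀ k : Fin n, Comparable' (c k.castSucc) (c k.succ)

/-- `𝔊_N`: all members of `F` that can be connected to `N` by a chain. -/
def GSet {H : Type*} [NormedAddCommGroup H] [InnerProductSpace ℂ H]
    (L : Set (Submodule ℂ H)) (N : Submodule ℂ H) : Set (Submodule ℂ H) :=
  {M | M ∈ famF L ∧ ChainConn L N M}

end



section Helpers

variable {H : Type*} [NormedAddCommGroup H] [InnerProductSpace ℂ H]

lemma rankOne_apply' (x f h : H) : rankOne x f h = (inner ℂ f h) • x := by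
  simp [rankOne]

lemma opRank_rankOne' {x f : H} (hx : x ≠ 0) (hf : f ≠ 0) : opRank (rankOne x f) = 1 := by
  unfold opRank
  rw [rank_eq_one_iff]
  have hff : (inner ℂ f f : ℂ) ≠ 0 := by simpa using hf
  refine ⟨⟨x, (inner ℂ f f : ℂ)⁻¹ • f, ?_⟩, ?_, ?_⟩
  · change rankOne x f _ = x
    rw [rankOne_apply', inner_smul_right, inv_mul_cancel₀ hff, one_smul]
  · intro h
    exact hx (congrArg Subtype.val h)
  · rintro ⟨_, h, rfl⟩
    refine ⟨inner ℂ f h, Subtype.ext ?_⟩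
    exact (rankOne_apply' x f h).symm

lemma opRank_zero' : opRank (0 : H →L[ℂ] H) = 0 := by
  unfold opRank
  have : LinearMap.range ((0 : H →L[ℂ] H) : H →ₗ[ℂ] H) = ⊥ := by
    rw [ContinuousLinearMap.toLinearMap_zero, LinearMap.range_zero]
  rw [this]
  exact rank_bot ℂ H

lemma exists_rankOne' [CompleteSpace H] (A : H →L[ℂ] H) (hA : opRank A = 1) :
    ∃ u v : H, A = rankOne u v := by
  unfold opRank at hA
  rw [rank_eq_one_iff] at hA
  obtain ⟨⟨u, hu⟩, hu0, h⟩ := hA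
  have hu0' : u ≠ 0 := fun h0 => hu0 (Subtype.ext h0)
  have huu : (inner ℂ u u : ℂ) ≠ 0 := by simpa using hu0'
  refine ⟨u, (inner ℂ u u : ℂ)⁻¹ • (ContinuousLinearMap.adjoint A u), ?_⟩
  ext z
  obtain ⟨r, hr⟩ := h ⟨A z, z, rfl⟩
  have hr' : r • u = A z := congrArg Subtype.val hr
  rw [rankOne_apply', inner_smul_left, ContinuousLinearMap.adjoint_inner_left, ← hr',
    inner_smul_right, map_inv₀, inner_conj_symm]
  congr 1
  field_simp

lemma minus_ge {L : Set (Submodule ℂ H)} {N E : Submodule ℂ H} (hE : E ∈ L) (h : ¬ N ≤ E) :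
    E ≤ minus L N :=
  le_trans (le_sSup (s := {E | E ∈ L ∧ ¬ N ≤ E}) (a := E) ⟨hE, h⟩) (Submodule.le_topologicalClosure _)

lemma rankOne_mem_alg {L : Set (Submodule ℂ H)} {N : Submodule ℂ H} {x f : H}
    (hx : x ∈ N) (hf : f ∈ (minus L N)ᗮ) : rankOne x f ∈ algL L := by
  intro E hE z hz
  rw [rankOne_apply']
  by_cases h : N ≤ E
  · exact E.smul_mem _ (h hx)
  · have : inner ℂ f z = (0 : ℂ) := Submodule.inner_left_of_mem_orthogonal (minus_ge hE h hz) hf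
    rw [this, zero_smul]
    exact E.zero_mem

lemma le_orth_of_rank_one [CompleteSpace H] {L : Set (Submodule ℂ H)} (hL : IsCSL L)
    {N E : Submodule ℂ H} (hN : N ∈ L) (h1 : Module.rank ℂ N = 1) (hE : E ∈ L)
    (h : ¬ N ≤ E) : E ≤ Nᗮ := by
  rw [rank_eq_one_iff] at h1
  obtain ⟨⟨e, he⟩, he0, hs⟩ := h1
  have hcN := hL.isClosed N hN
  have hcE := hL.isClosed E hE
  haveI : CompleteSpace N := hcN.completeSpace_coe
  haveI : CompleteSpace E := hcE.completeSpace_coe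
  have hPN : ∀ z, projOf N z = N.orthogonalProjectionOnto z := by
    intro z; unfold projOf; rw [dif_pos hcN]; rfl
  have hPE : ∀ z, projOf E z = E.orthogonalProjectionOnto z := by
    intro z; unfold projOf; rw [dif_pos hcE]; rfl
  have hcomm := congrArg (fun T : H →L[ℂ] H => T e) (hL.commutes E hE N hN)
  simp only [ContinuousLinearMap.mul_apply] at hcomm
  have hNe : projOf N e = e := by
    rw [hPN]
    exact Submodule.starProjection_eq_self_iff.2 he
  rw [hNe] at hcomm
  have hmemN : projOf E e ∈ N := by
    rw [hcomm, hPN]; exact Subtype.mem _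
  have hmemE : projOf E e ∈ E := by
    rw [hPE]; exact Subtype.mem _
  obtain ⟨c, hc⟩ := hs ⟨_, hmemN⟩
  have hc' : c • e = projOf E e := congrArg Subtype.val hc
  have hspan : ∀ y ∈ N, ∃ r : ℂ, r • e = y := fun y hy => by
    obtain ⟨r, hr⟩ := hs ⟨y, hy⟩
    exact ⟨r, congrArg Subtype.val hr⟩
  have hz : projOf E e = 0 := by
    by_contra hne
    have hc0 : c ≠ 0 := by
      rintro rfl
      exact hne (by rw [← hc', zero_smul])
    apply h
    intro y hy
    obtain ⟨r, rfl⟩ := hspan y hy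
    apply E.smul_mem
    rw [← hc'] at hmemE
    exact (E.smul_mem_iff hc0).1 hmemE
  have heE : e ∈ Eᗮ := by
    rw [hPE] at hz
    exact Submodule.orthogonalProjectionOnto_eq_zero_iff.1 (Subtype.ext hz)
  intro y hy
  rw [Submodule.mem_orthogonal]
  intro n hn
  obtain ⟨r, rfl⟩ := hspan n hn
  rw [inner_smul_left, Submodule.inner_left_of_mem_orthogonal hy heE, mul_zero]

lemma minus_le_orth [CompleteSpace H] {L : Set (Submodule ℂ H)} (hL : IsCSL L)
    {N : Submodule ℂ H} (hN : N ∈ L) (h1 : Module.rank ℂ N = 1) : minus L N ≤ Nᗮ := by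
  unfold minus closedJoin
  apply Submodule.topologicalClosure_minimal _ _ N.isClosed_orthogonal
  apply sSup_le
  rintro E ⟨hE, h⟩
  exact le_orth_of_rank_one hL hN h1 hE h

/-- Abstract core: a linear injective map into a line forces rank one. -/
lemma rank_one_of_line {M : Submodule ℂ H} (hM : M ≠ ⊥) (U : M →ₗ[ℂ] H)
    (hU : ∀ x, x ≠ 0 → U x ≠ 0) (w : H) (hw : ∀ x, ∃ c : ℂ, U x = c • w) :
    Module.rank ℂ M = 1 := by
  rw [rank_eq_one_iff]
  obtain ⟨e, he, he0⟩ := Submodule.exists_mem_ne_zero_of_ne_bot hM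
  have he0' : (⟨e, he⟩ : M) ≠ 0 := fun h => he0 (congrArg Subtype.val h)
  refine ⟨⟨e, he⟩, he0', fun y => ?_⟩
  obtain ⟨a, ha⟩ := hw ⟨e, he⟩
  obtain ⟨b, hb⟩ := hw y
  have ha0 : a ≠ 0 := by
    rintro rfl
    exact hU _ he0' (by rw [ha, zero_smul])
  refine ⟨b / a, ?_⟩
  by_contra hne
  apply hU _ (sub_ne_zero.2 hne)
  rw [map_sub, map_smul, ha, hb, smul_smul, div_mul_cancel₀ _ ha0, sub_self]

lemma rankOne_eq_left {a b c d : H} (h : rankOne a b = rankOne c d) (hb : b ≠ 0) :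
    ∃ k : ℂ, a = k • c := by
  have hbb : (inner ℂ b b : ℂ) ≠ 0 := by simpa using hb
  have := congrArg (fun T : H →L[ℂ] H => T b) h
  simp only [rankOne_apply'] at this
  refine ⟨(inner ℂ b b : ℂ)⁻¹ * inner ℂ d b, ?_⟩
  rw [mul_smul, ← this, smul_smul, inv_mul_cancel₀ hbb, one_smul]

lemma rankOne_eq_right {a b c d : H} (h : rankOne a b = rankOne c d) (ha : a ≠ 0) :
    ∃ k : ℂ, b = k • d := by
  have haa : (inner ℂ a a : ℂ) ≠ 0 := by simpa using ha
  refine ⟨(inner ℂ a a : ℂ)⁻¹ * inner ℂ c a, ?_⟩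
  apply ext_inner_right ℂ
  intro z
  have := congrArg (fun T : H →L[ℂ] H => (inner ℂ a (T z) : ℂ)) h
  simp only [rankOne_apply', inner_smul_right] at this
  rw [inner_smul_left, map_mul, map_inv₀, inner_conj_symm, inner_conj_symm]
  field_simp
  linear_combination this

lemma rankOne_zero_left' (f : H) : rankOne 0 f = 0 := by
  ext z; simp [rankOne_apply']

lemma rankOne_zero_right' (x : H) : rankOne x 0 = 0 := by
  ext z; simp [rankOne_apply']

end Helpers

theorem stmt_6 {H : Type*} [NormedAddCommGroup H] [InnerProductSpace ℂ H]
    [CompleteSpace H] [TopologicalSpace.SeparableSpace H]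
    (L : Set (Submodule ℂ H)) (hL : IsCSL L)
    (Φ : (H →L[ℂ] H) → (H →L[ℂ] H)) (hlin : IsLinearOnAlg L Φ)
    (hrank : RankPreserving L Φ)
    (N : Submodule ℂ H) (hN : N ∈ L) :
    Isolated L N ↔ (Consistent L Φ N ∧ Twisted L Φ N) := by
  have hcN := hL.isClosed N hN
  haveI : CompleteSpace N := hcN.completeSpace_coe
  have key : ∀ x ∈ N, ∀ f ∈ (minus L N)ᗮ, x ≠ 0 → f ≠ 0 → opRank (Φ (rankOne x f)) = 1 := by
    intro x hx f hf hx0 hf0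
    rw [hrank _ (rankOne_mem_alg hx hf), opRank_rankOne' hx0 hf0]
    rw [opRank_rankOne' hx0 hf0]
    exact Cardinal.one_lt_aleph0
  constructor
  · rintro ⟨h1, hperp⟩
    have hbot : N ≠ ⊥ := by
      rintro rfl
      rw [rank_bot] at h1
      exact zero_ne_one h1
    have hnle : ¬ N ≤ Nᗮ := by
      intro hle
      apply hbot
      rw [eq_bot_iff, ← N.inf_orthogonal_eq_bot]
      exact le_inf le_rfl hle
    have hm : minus L N = Nᗮ := le_antisymm (minus_le_orth hL hN h1) (minus_ge hperp hnle)
    have hmN : (minus L N)ᗮ = N := by rw [hm, Submodule.orthogonal_orthogonal]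
    have htop : minus L N ≠ ⊤ := by
      intro ht
      rw [ht, Submodule.top_orthogonal_eq_bot] at hmN
      exact hbot hmN.symm
    obtain ⟨⟨e, he⟩, he0, hs⟩ := rank_eq_one_iff.1 h1
    have he0' : e ≠ 0 := fun h0 => he0 (Subtype.ext h0)
    have hee : (inner ℂ e e : ℂ) ≠ 0 := by simpa using he0'
    have heM : e ∈ (minus L N)ᗮ := by rw [hmN]; exact he
    obtain ⟨u, v, huv⟩ := exists_rankOne' _ (key e he e heM he0' he0')
    -- coordinate functional
    let g : H →ₗ[ℂ] ℂ := (inner ℂ e e : ℂ)⁻¹ • ((innerSL ℂ e : H →L[ℂ] ℂ) : H →ₗ[ℂ] ℂ)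
    have hg : ∀ y ∈ N, g y • e = y := by
      intro y hy
      obtain ⟨r, hr⟩ := hs ⟨y, hy⟩
      have hr' : r • e = y := congrArg Subtype.val hr
      have : g y = r := by
        simp only [g, LinearMap.smul_apply, ContinuousLinearMap.coe_coe, innerSL_apply_apply]
        rw [← hr', inner_smul_right, smul_eq_mul]
        field_simp
      rw [this, hr']
    have hmain : ∀ x ∈ N, ∀ f ∈ (minus L N)ᗮ,
        Φ (rankOne x f) = (g x * starRingEnd ℂ (g f)) • rankOne u v := by
      intro x hx f hf
      rw [← huv, ← hlin.map_smul _ _ (rankOne_mem_alg he heM)]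
      congr 1
      rw [hmN] at hf
      ext z
      conv_lhs => rw [← hg x hx, ← hg f hf]
      simp only [rankOne_apply', ContinuousLinearMap.smul_apply, inner_smul_left, smul_smul]
      congr 1
      ring
    let gs : H →ₗ⋆[ℂ] ℂ :=
      { toFun := fun z => starRingEnd ℂ (g z)
        map_add' := fun a b => by simp
        map_smul' := fun c a => by simp }
    have hgs : ∀ z, gs z = starRingEnd ℂ (g z) := fun z => rfl
    refine ⟨⟨hbot, htop, (g.smulRight u).comp N.subtype,
      (g.smulRight v).comp (minus L N)ᗮ.subtype, ?_⟩, hbot, htop,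
      { toFun := fun f => gs f • u
        map_add' := fun a b => by simp [add_smul]
        map_smul' := fun c a => by simp [mul_smul] },
      { toFun := fun f => gs f • v
        map_add' := fun a b => by simp [add_smul]
        map_smul' := fun c a => by simp [mul_smul] }, ?_⟩
    · intro x f
      rw [hmain x x.2 f f.2]
      ext z
      simp only [rankOne_apply', ContinuousLinearMap.smul_apply, LinearMap.comp_apply,
        LinearMap.smulRight_apply, Submodule.subtype_apply, inner_smul_left, smul_smul]
      congr 1
      ring
    · intro x f
      rw [hmain x x.2 f f.2]
      ext z
      simp only [rankOne_apply', ContinuousLinearMap.smul_apply, LinearMap.coe_mk,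
        AddHom.coe_mk, inner_smul_left, smul_smul, hgs, Complex.conj_conj]
      congr 1
      ring
  · rintro ⟨⟨hbot, htop, U, V, hUV⟩, -, -, U', V', hUV'⟩
    have hcl : IsClosed (minus L N : Set H) := Submodule.isClosed_topologicalClosure _
    haveI : CompleteSpace (minus L N) := hcl.completeSpace_coe
    have hMbot : (minus L N)ᗮ ≠ ⊥ := by
      intro h
      exact htop (Submodule.orthogonal_eq_bot_iff.1 h)
    obtain ⟨x₀, hx₀, hx₀0⟩ := Submodule.exists_mem_ne_zero_of_ne_bot hbot
    obtain ⟨f₀, hf₀, hf₀0⟩ := Submodule.exists_mem_ne_zero_of_ne_bot hMbot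
    have hne : ∀ (x : N) (f : ((minus L N)ᗮ : Submodule ℂ H)), (x : H) ≠ 0 → (f : H) ≠ 0 →
        U x ≠ 0 ∧ V f ≠ 0 := by
      intro x f hx hf
      have hk := key x x.2 f f.2 hx hf
      rw [hUV] at hk
      constructor
      · intro h
        rw [h, rankOne_zero_left', opRank_zero'] at hk
        exact zero_ne_one hk
      · intro h
        rw [h, rankOne_zero_right', opRank_zero'] at hk
        exact zero_ne_one hk
    have hN1 : Module.rank ℂ N = 1 := by
      apply rank_one_of_line hbot U _ (U' ⟨f₀, hf₀⟩)
      · intro x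
        exact rankOne_eq_left ((hUV x ⟨f₀, hf₀⟩).symm.trans (hUV' x ⟨f₀, hf₀⟩))
          (hne ⟨x₀, hx₀⟩ ⟨f₀, hf₀⟩ hx₀0 hf₀0).2
      · intro x hx
        exact (hne x ⟨f₀, hf₀⟩ (fun h => hx (Subtype.ext h)) hf₀0).1
    have hM1 : Module.rank ℂ ((minus L N)ᗮ : Submodule ℂ H) = 1 := by
      apply rank_one_of_line hMbot V _ (V' ⟨x₀, hx₀⟩)
      · intro f
        exact rankOne_eq_right ((hUV ⟨x₀, hx₀⟩ f).symm.trans (hUV' ⟨x₀, hx₀⟩ f))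
          (hne ⟨x₀, hx₀⟩ ⟨f₀, hf₀⟩ hx₀0 hf₀0).1
      · intro f hf
        exact (hne ⟨x₀, hx₀⟩ f hx₀0 (fun h => hf (Subtype.ext h))).2
    refine ⟨hN1, ?_⟩
    have hle : N ≤ (minus L N)ᗮ :=
      (Submodule.le_orthogonal_orthogonal N).trans
        (Submodule.orthogonal_le (minus_le_orth hL hN hN1))
    have hge : (minus L N)ᗮ ≤ N := by
      obtain ⟨⟨e, he⟩, he0, hs⟩ := rank_eq_one_iff.1 hM1
      obtain ⟨r, hr⟩ := hs ⟨x₀, hle hx₀⟩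
      have hr' : r • e = x₀ := congrArg Subtype.val hr
      have hr0 : r ≠ 0 := by
        rintro rfl
        exact hx₀0 (by rw [← hr', zero_smul])
      have heN : e ∈ N := by
        rw [← hr'] at hx₀
        exact (N.smul_mem_iff hr0).1 hx₀
      intro y hy
      obtain ⟨s, hs'⟩ := hs ⟨y, hy⟩
      have : s • e = y := congrArg Subtype.val hs'
      rw [← this]
      exact N.smul_mem _ heN
    have : N = (minus L N)ᗮ := le_antisymm hle hge
    rw [this, Submodule.orthogonal_orthogonal]
    exact hL.join_mem _ (fun E hE => hE.1)
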